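/- arXiv:2107.02325 — 2 statements merged into one kernel-verified Lean document; each statement's English description precedes it below -/
import Mathlib

section
/- Let f be a ternary cubic form over ℂ and let D = det(∂ᵢ∂ⱼ f) be its Hessian determinant. Then f is completely reducible if and only if there exists s ∈ ℂ such that D² = s·f² (as polynomials). -/
open MvPolynomial

/-- The Hessian determinant `det (∂ᵢ∂ⱼ f)` of a ternary form. -/
noncomputable def hessianDet (f : MvPolynomial (Fin 3) ℂ) : MvPolynomial (Fin 3) ℂ :=
  Matrix.det (Matrix.of fun i j : Fin 3 => pderiv i (pderiv j f))

/-- A linear form is a homogeneous polynomial of degree 1. -/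
def IsLinearForm (a : MvPolynomial (Fin 3) ℂ) : Prop := a.IsHomogeneous 1

/-- A cubic form is completely reducible if it is a product of three linear forms. -/
def CompletelyReducible (f : MvPolynomial (Fin 3) ℂ) : Prop :=
  ∃ a b c : MvPolynomial (Fin 3) ℂ,
    IsLinearForm a ∧ IsLinearForm b ∧ IsLinearForm c ∧ f = a * b * c

namespace CubicHessian

/-- The ambient space. -/
abbrev V := Fin 3 → ℂ

lemma exists_coords {p v : V} (h : LinearIndependent ℂ ![p, v]) :
    ∃ (r : V) (α β γ : V →ₗ[ℂ] ℂ), (∀ x, x = α x • p + β x • v + γ x • r) ∧ γ r = 1 ∧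
      (Matrix.of ![r, p, v]).det ≠ 0 := by
  obtain ⟨r, hr⟩ := exists_linearIndependent_cons_of_lt_finrank h (by simp)
  have hr' : LinearIndependent ℂ ![r, p, v] := hr
  let b := basisOfLinearIndependentOfCardEqFinrank hr' (by simp)
  have hb : ⇑b = ![r, p, v] := coe_basisOfLinearIndependentOfCardEqFinrank hr' (by simp)
  have b0 : b 0 = r := by rw [hb]; rfl
  have b1 : b 1 = p := by rw [hb]; rfl
  have b2 : b 2 = v := by rw [hb]; rfl
  refine ⟨r, b.coord 1, b.coord 2, b.coord 0, ?_, ?_, ?_⟩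
  · intro x
    have := b.sum_repr x
    rw [Fin.sum_univ_three, b0, b1, b2] at this
    simp only [Module.Basis.coord_apply]
    conv_lhs => rw [← this]
    abel
  · conv_lhs => rw [← b0]
    simp
  · have : IsUnit (Matrix.of ![r, p, v]) := Matrix.linearIndependent_rows_iff_isUnit.1 hr'
    exact ((Matrix.isUnit_iff_isUnit_det _).1 this).ne_zero

lemma quad_of_isotropic (A : V →ₗ[ℂ] V →ₗ[ℂ] ℂ) (hA : ∀ x y, A x y = A y x) {p v : V}
    (h : LinearIndependent ℂ ![p, v]) (hpp : A p p = 0) (hpv : A p v = 0) (hvv : A v v = 0) :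
    ∃ l m : V →ₗ[ℂ] ℂ, ∀ x, A x x = l x * m x := by
  obtain ⟨r, α, β, γ, hx, -, -⟩ := exists_coords h
  refine ⟨γ, (2 * A p r) • α + (2 * A v r) • β + (A r r) • γ, fun x => ?_⟩
  have hvp : A v p = 0 := by rw [hA, hpv]
  conv_lhs => rw [hx x]
  simp only [map_add, map_smul, LinearMap.add_apply, LinearMap.smul_apply, smul_eq_mul, hpp, hpv,
    hvv, hvp, hA r p, hA r v]
  ring

lemma quad_of_kernel (A : V →ₗ[ℂ] V →ₗ[ℂ] ℂ) (hA : ∀ x y, A x y = A y x) {p : V}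
    (hp : p ≠ 0) (hk : A p = 0) :
    ∃ l m : V →ₗ[ℂ] ℂ, ∀ x, A x x = l x * m x := by
  obtain ⟨u, hu⟩ := exists_linearIndependent_pair_of_one_lt_finrank (R := ℂ) (M := V) (by simp) hp
  obtain ⟨w, α, β, γ, hx, -, -⟩ := exists_coords hu
  have e : ∀ x, A x x = (A u u) * β x ^ 2 + 2 * A u w * (β x * γ x) + A w w * γ x ^ 2 := by
    intro x
    have h1 : ∀ y, A p y = 0 := fun y => by rw [hk]; rfl
    have h2 : ∀ y, A y p = 0 := fun y => by rw [hA, h1]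
    conv_lhs => rw [hx x]
    simp only [map_add, map_smul, LinearMap.add_apply, LinearMap.smul_apply, smul_eq_mul, h1, h2,
      hA w u]
    ring
  by_cases h0 : A u u = 0
  · refine ⟨γ, (2 * A u w) • β + (A w w) • γ, fun x => ?_⟩
    rw [e]
    simp only [LinearMap.add_apply, LinearMap.smul_apply, smul_eq_mul, h0]
    ring
  · obtain ⟨d, hd⟩ := IsAlgClosed.exists_pow_nat_eq (A u w ^ 2 - A u u * A w w) (n := 2) (by norm_num)
    refine ⟨(A u u)⁻¹ • ((A u u) • β + (A u w + d) • γ), (A u u) • β + (A u w - d) • γ,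
      fun x => ?_⟩
    rw [e]
    simp only [LinearMap.add_apply, LinearMap.smul_apply, smul_eq_mul]
    field_simp
    linear_combination (γ x) ^ 2 * hd

variable (T : V →ₗ[ℂ] V →ₗ[ℂ] V →ₗ[ℂ] ℂ)

lemma linear_factor (h12 : ∀ x y z, T x y z = T y x z) (h23 : ∀ x y z, T x y z = T x z y)
    {p v : V} (h : LinearIndependent ℂ ![p, v])
    (h0 : T p p p = 0) (h1 : T p p v = 0) (h2 : T p v v = 0) (h3 : T v v v = 0) :
    ∃ (γ : V →ₗ[ℂ] ℂ) (r : V) (A : V →ₗ[ℂ] V →ₗ[ℂ] ℂ), γ r ≠ 0 ∧ (∀ x y, A x y = A y x) ∧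
      ∀ x, T x x x = γ x * A x x := by
  obtain ⟨r, α, β, γ, hx, hr, -⟩ := exists_coords h
  refine ⟨γ, r, (3 : ℂ) • T r - (3 / 2 : ℂ) • (γ.smulRight (T r r) + (T r r).smulRight γ)
    + (T r r r) • γ.smulRight γ, by simp [hr], ?_, ?_⟩
  · intro x y
    simp only [LinearMap.add_apply, LinearMap.sub_apply, LinearMap.smul_apply, smul_eq_mul,
      LinearMap.smulRight_apply]
    rw [h23 r x y]
    ring
  · intro x
    simp only [LinearMap.add_apply, LinearMap.sub_apply, LinearMap.smul_apply, smul_eq_mul,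
      LinearMap.smulRight_apply]
    have e1 : T p v p = 0 := by rw [h23, h1]
    have e2 : T v p p = 0 := by rw [h12, e1]
    have e3 : T v p v = 0 := by rw [h12, h2]
    have e4 : T v v p = 0 := by rw [h23, e3]
    have f1 : T p r p = T r p p := by rw [h12]
    have f2 : T p r v = T r p v := by rw [h12]
    have f1' : T v r p = T r p v := by rw [h12, h23]
    have f2' : T v r v = T r v v := by rw [h12]
    have f3 : T p p r = T r p p := by rw [h23, h12]
    have f4 : T p v r = T r p v := by rw [h23, h12]
    have f5 : T v p r = T r p v := by rw [h12, f4]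
    have f6 : T v v r = T r v v := by rw [h23, h12]
    have f7 : T p r r = T r r p := by rw [h12, h23]
    have f8 : T v r r = T r r v := by rw [h12, h23]
    have f9 : T r v p = T r p v := by rw [h23]
    have f10 : T r v r = T r r v := by rw [h23]
    have f11 : T r p r = T r r p := by rw [h23]
    have E1 : T x x x = T (α x • p + β x • v + γ x • r) (α x • p + β x • v + γ x • r)
      (α x • p + β x • v + γ x • r) := by rw [← hx x]
    have E2 : T r x x = T r (α x • p + β x • v + γ x • r)
      (α x • p + β x • v + γ x • r) := by rw [← hx x]
    have E3 : T r r x = T r r (α x • p + β x • v + γ x • r) := by rw [← hx x]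
    rw [E1, E2, E3]
    generalize α x = a
    generalize β x = b
    generalize γ x = c
    simp only [map_add, map_smul, LinearMap.add_apply, LinearMap.smul_apply, smul_eq_mul,
      h0, h1, h2, h3, e1, e2, e3, e4, f1, f2, f1', f2', f3, f4, f5, f6, f7, f8, f9, f10, f11]
    ring

lemma smooth_point (h12 : ∀ x y z, T x y z = T y x z) (h23 : ∀ x y z, T x y z = T x z y)
    (k : ℂ) (hH : ∀ (x : V) (P : Fin 3 → V),
      (Matrix.of fun i j => T x (P i) (P j)).det = k * (Matrix.of P).det ^ 2 * T x x x)
    {p : V} (h0 : T p p p = 0) (hs : T p p ≠ 0) :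
    ∃ v, LinearIndependent ℂ ![p, v] ∧ T p p v = 0 ∧ T p v v = 0 ∧ T v v v = 0 := by
  have hd := hH p (fun i => Pi.single i 1)
  rw [h0, mul_zero] at hd
  obtain ⟨v, hv, hMv⟩ := Matrix.exists_mulVec_eq_zero_iff.2 hd
  have hker : T p v = 0 := by
    apply LinearMap.pi_ext'
    intro i
    ext
    have := congrFun hMv i
    simp only [Matrix.mulVec, dotProduct, Matrix.of_apply, Pi.zero_apply] at this
    simp only [LinearMap.comp_apply, LinearMap.coe_single, LinearMap.zero_apply]
    rw [h23, ← this]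
    conv_lhs => rw [pi_eq_sum_univ' v]
    rw [map_sum]
    refine Finset.sum_congr rfl fun j _ => ?_
    rw [map_smul, smul_eq_mul, mul_comm]
  have hk : ∀ y, T p v y = 0 := fun y => by rw [hker]; rfl
  have hk2 : ∀ y, T p y v = 0 := fun y => by rw [h23, hk]
  have hli : LinearIndependent ℂ ![p, v] := by
    rw [LinearIndependent.pair_iff]
    intro s t hst
    have hs0 : s = 0 := by
      have := congrArg (T p) hst
      rw [map_add, map_smul, map_smul, hker, smul_zero, add_zero, map_zero] at this
      exact (smul_eq_zero.1 this).resolve_right hs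
    refine ⟨hs0, ?_⟩
    rw [hs0, zero_smul, zero_add] at hst
    exact (smul_eq_zero.1 hst).resolve_right hv
  refine ⟨v, hli, hk2 p, hk v, ?_⟩
  obtain ⟨r, α, β, γ, hx, hr, hdet⟩ := exists_coords hli
  have hm : T p p r ≠ 0 := by
    intro hm
    apply hs
    refine LinearMap.ext fun x => ?_
    rw [hx x]
    simp [h0, hk2, hm]
  have key : ∀ t : ℂ, - (T p p r) ^ 2 * (t * T v v v) =
      k * (Matrix.of ![r, p, v]).det ^ 2 * (t ^ 3 * T v v v) := by
    intro t
    have := hH (p + t • v) ![r, p, v]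
    have e1 : ∀ y, T v p y = 0 := fun y => by rw [h12, hk]
    have e2 : ∀ y, T v y p = 0 := fun y => by rw [h23, e1]
    rw [Matrix.det_fin_three] at this
    simp only [map_add, map_smul, LinearMap.add_apply, LinearMap.smul_apply, smul_eq_mul,
      Matrix.of_apply, Matrix.cons_val, h0, hk, hk2, e1, e2] at this
    rw [h23 p r p] at this
    linear_combination this
  by_contra hF
  have k1 := key 1
  have k2 := key 2
  have : (T p p r) ^ 2 * T v v v = 0 := by linear_combination (k2 - 8 * k1) / 6
  rcases mul_eq_zero.1 this with h | h
  · exact hm (pow_eq_zero_iff (by norm_num) |>.1 h)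
  · exact hF h

lemma no_smooth (h12 : ∀ x y z, T x y z = T y x z) (h23 : ∀ x y z, T x y z = T x z y)
    (hs : ∀ p, T p p p = 0 → T p p = 0) {q : V} (hq : T q q q ≠ 0) (p : V) :
    (T q q q) ^ 2 * T p p p = (T q q p) ^ 3 := by
  have hex : ∀ t : ℂ, T (p + t • q) (p + t • q) (p + t • q) =
      T q q q * t ^ 3 + 3 * T q q p * t ^ 2 + 3 * T q p p * t + T p p p := by
    intro t
    simp only [map_add, map_smul, LinearMap.add_apply, LinearMap.smul_apply, smul_eq_mul]
    rw [h12 p q q, h23 q p q, h12 p q p, h23 p p q, h12 p q p]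
    ring
  have hex' : ∀ t : ℂ, T (p + t • q) (p + t • q) q =
      T q q q * t ^ 2 + 2 * T q q p * t + T q p p := by
    intro t
    simp only [map_add, map_smul, LinearMap.add_apply, LinearMap.smul_apply, smul_eq_mul]
    rw [h12 p q q, h23 q p q, h23 p p q, h12 p q p]
    ring
  have hroot : ∀ t : ℂ, T q q q * t ^ 3 + 3 * T q q p * t ^ 2 + 3 * T q p p * t + T p p p = 0 →
      T q q q * t ^ 2 + 2 * T q q p * t + T q p p = 0 := by
    intro t ht
    rw [← hex] at ht
    rw [← hex', hs _ ht]
    rfl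
  revert hroot hq
  generalize T q q q = F
  generalize T q q p = b
  generalize T q p p = c
  generalize T p p p = d
  intro hF hroot
  obtain ⟨r, hr⟩ : ∃ r : ℂ, F * r ^ 3 + 3 * b * r ^ 2 + 3 * c * r + d = 0 := by
    have hdeg := Polynomial.degree_cubic (b := 3 * b) (c := 3 * c) (d := d) hF
    obtain ⟨r, hr⟩ := IsAlgClosed.exists_root _ (by rw [hdeg]; norm_num)
    refine ⟨r, ?_⟩
    simpa [Polynomial.IsRoot] using hr
  have hr' := hroot r hr
  have hsum : ∃ s : ℂ, F * s = -(3 * b + 2 * F * r) :=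
    ⟨-(3 * b + 2 * F * r) / F, by field_simp⟩
  obtain ⟨s, hs⟩ := hsum
  have hs1 : F * s ^ 3 + 3 * b * s ^ 2 + 3 * c * s + d = 0 := by
    linear_combination hr + (s - r) ^ 2 * hs + 3 * (s - r) * hr'
  have hs2 := hroot s hs1
  have : F * (s - r) ^ 2 = 0 := by
    linear_combination 3 * hs2 - 3 * hr' - 2 * (s - r) * hs
  have hsr : s = r := by
    have := (mul_eq_zero.1 this).resolve_left hF
    exact sub_eq_zero.1 (pow_eq_zero_iff (by norm_num) |>.1 this)
  subst hsr
  have hb : b = -(F * s) := by linear_combination hs / 3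
  subst hb
  have hc : c = F * s ^ 2 := by linear_combination hr'
  subst hc
  linear_combination F ^ 2 * hr

lemma split (h12 : ∀ x y z, T x y z = T y x z) (h23 : ∀ x y z, T x y z = T x z y)
    (k : ℂ) (hH : ∀ (x : V) (P : Fin 3 → V),
      (Matrix.of fun i j => T x (P i) (P j)).det = k * (Matrix.of P).det ^ 2 * T x x x) :
    ∃ l m n : V →ₗ[ℂ] ℂ, ∀ x, T x x x = l x * m x * n x := by
  by_cases hz : ∀ x, T x x x = 0
  · exact ⟨0, 0, 0, by simp [hz]⟩
  push Not at hz
  obtain ⟨q, hq⟩ := hz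
  by_cases hs : ∀ p, T p p p = 0 → T p p = 0
  · refine ⟨((T q q q) ^ 2)⁻¹ • T q q, T q q, T q q, fun x => ?_⟩
    have := no_smooth T h12 h23 hs hq x
    simp only [LinearMap.smul_apply, smul_eq_mul]
    field_simp
    linear_combination this
  push Not at hs
  obtain ⟨p, hp0, hps⟩ := hs
  obtain ⟨v, hli, h1, h2, h3⟩ := smooth_point T h12 h23 k hH hp0 hps
  obtain ⟨γ, r, A, hr, hA, hT⟩ := linear_factor T h12 h23 hli hp0 h1 h2 h3
  suffices h : ∃ l m : V →ₗ[ℂ] ℂ, ∀ x, A x x = l x * m x by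
    obtain ⟨l, m, h⟩ := h
    exact ⟨γ, l, m, fun x => by rw [hT, h]; ring⟩
  have pol : ∀ x y, 3 * T x x y = γ y * A x x + 2 * γ x * A x y := by
    intro x y
    have e1 := hT (x + y)
    have e2 := hT (x - y)
    have e3 := hT y
    simp only [map_add, map_sub, LinearMap.add_apply, LinearMap.sub_apply] at e1 e2
    rw [h12 y x x, h23 x y x, h12 y x y, h23 y y x, h12 y x y, hA y x] at e1 e2
    linear_combination (e1 - e2) / 2 - e3
  by_cases hg : ∃ p, A p p = 0 ∧ γ p ≠ 0
  · obtain ⟨p, hp, hγ⟩ := hg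
    by_cases hAp : A p = 0
    · refine quad_of_kernel A hA ?_ hAp
      rintro rfl
      simp at hγ
    · have hps : T p p ≠ 0 := by
        intro h
        apply hAp
        refine LinearMap.ext fun y => ?_
        have := pol p y
        rw [h, hp] at this
        simpa [hγ] using this
      have hp0 : T p p p = 0 := by rw [hT, hp, mul_zero]
      obtain ⟨v, hli, h1, h2, h3⟩ := smooth_point T h12 h23 k hH hp0 hps
      have hpv : A p v = 0 := by
        have := pol p v
        rw [h1, hp] at this
        simpa [hγ] using this
      refine quad_of_isotropic A hA hli hp hpv ?_
      have := pol v p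
      rw [h23, h12, h2, hA v p, hpv] at this
      simpa [hγ] using this
  · push Not at hg
    have hrr : A r r ≠ 0 := fun h => hr (hg r h)
    refine ⟨(A r r / γ r ^ 2) • γ, γ, fun x => ?_⟩
    obtain ⟨y, hy⟩ : ∃ y, y = x - (γ x / γ r) • r := ⟨_, rfl⟩
    have hy0 : γ y = 0 := by
      rw [hy]
      simp only [map_sub, map_smul, smul_eq_mul]
      field_simp
      ring
    have hroot : ∀ t : ℂ, A y y + 2 * t * A y r + t ^ 2 * A r r = 0 → t = 0 := by
      intro t ht
      have := hg (y + t • r) (by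
        simp only [map_add, map_smul, LinearMap.add_apply, LinearMap.smul_apply, smul_eq_mul]
        rw [hA r y]
        linear_combination ht)
      simpa [hy0, hr] using this
    obtain ⟨d, hd⟩ := IsAlgClosed.exists_pow_nat_eq (A y r ^ 2 - A y y * A r r) (n := 2)
      (by norm_num)
    have r1 := hroot ((-A y r + d) / A r r) (by field_simp; linear_combination hd)
    have r2 := hroot ((-A y r - d) / A r r) (by field_simp; linear_combination hd)
    have r1' : -A y r + d = 0 := by simpa [hrr] using r1
    have r2' : -A y r - d = 0 := by simpa [hrr] using r2
    have a1 : A y r = 0 := by linear_combination -(r1' + r2') / 2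
    have d0 : d = 0 := by linear_combination (r1' - r2') / 2
    have a2 : A y y = 0 := by
      have : A y y * A r r = 0 := by rw [a1, d0] at hd; linear_combination hd
      exact (mul_eq_zero.1 this).resolve_right hrr
    have hxy : x = y + (γ x / γ r) • r := by rw [hy]; abel
    conv_lhs => rw [hxy]
    simp only [map_add, map_smul, LinearMap.add_apply, LinearMap.smul_apply, smul_eq_mul]
    rw [hA r y, a1, a2]
    field_simp
    ring

/-- The trilinear form with given coefficients. -/
noncomputable def tri (c : Fin 3 → Fin 3 → Fin 3 → ℂ) : V →ₗ[ℂ] V →ₗ[ℂ] V →ₗ[ℂ] ℂ :=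
  ∑ i, ∑ j, ∑ k, c j k i • (LinearMap.proj (R := ℂ) (φ := fun _ : Fin 3 => ℂ) i).smulRight
    ((LinearMap.proj (R := ℂ) (φ := fun _ : Fin 3 => ℂ) j).smulRight
      (LinearMap.proj (R := ℂ) (φ := fun _ : Fin 3 => ℂ) k))

lemma tri_apply (c : Fin 3 → Fin 3 → Fin 3 → ℂ) (x y z : V) :
    tri c x y z = ∑ i, ∑ j, ∑ k, c j k i * (x i * (y j * z k)) := by
  simp [tri]

lemma pderiv_comm' (i j : Fin 3) (f : MvPolynomial (Fin 3) ℂ) :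
    pderiv i (pderiv j f) = pderiv j (pderiv i f) := by
  have : ⁅(pderiv i : Derivation ℂ (MvPolynomial (Fin 3) ℂ) (MvPolynomial (Fin 3) ℂ)), (pderiv j : Derivation ℂ (MvPolynomial (Fin 3) ℂ) (MvPolynomial (Fin 3) ℂ))⁆ = 0 := by
    apply MvPolynomial.derivation_ext
    intro k
    simp [Derivation.commutator_apply, pderiv_X, Pi.single_apply, apply_ite]
  have h := congrArg (fun D => D f) this
  simpa [Derivation.commutator_apply, sub_eq_zero] using h

lemma hom_one {g : MvPolynomial (Fin 3) ℂ} (hg : g.IsHomogeneous 1) :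
    g = ∑ i, X i * C (coeff 0 (pderiv i g)) := by
  have := hg.sum_X_mul_pderiv
  rw [one_smul] at this
  conv_lhs => rw [← this]
  refine Finset.sum_congr rfl fun i _ => ?_
  congr 1
  have h0 : (pderiv i g).IsHomogeneous 0 := hg.pderiv
  rw [← totalDegree_zero_iff_isHomogeneous] at h0
  exact totalDegree_eq_zero_iff_eq_C.1 h0

/-- The linear form attached to a functional. -/
noncomputable def linForm (l : V →ₗ[ℂ] ℂ) : MvPolynomial (Fin 3) ℂ :=
  ∑ i, C (l (Pi.single i 1)) * X i

lemma linForm_isLinear (l : V →ₗ[ℂ] ℂ) : IsLinearForm (linForm l) :=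
  IsHomogeneous.sum _ _ _ fun i _ => isHomogeneous_C_mul_X _ i

lemma eval_linForm (l : V →ₗ[ℂ] ℂ) (x : V) : eval x (linForm l) = l x := by
  conv_rhs => rw [LinearMap.pi_apply_eq_sum_univ l x]
  simp only [linForm, map_sum, map_mul, eval_C, eval_X, smul_eq_mul]
  refine Finset.sum_congr rfl fun j _ => ?_
  rw [mul_comm]
  congr 2
  ext k
  simp [Pi.single_apply, eq_comm]

lemma forward {f : MvPolynomial (Fin 3) ℂ} (hf : f.IsHomogeneous 3) {k : ℂ}
    (h : hessianDet f = C k * f) : CompletelyReducible f := by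
  let c : Fin 3 → Fin 3 → Fin 3 → ℂ := fun i j l => coeff 0 (pderiv l (pderiv i (pderiv j f)))
  have c1 : ∀ i j l, c i j l = c j i l := fun i j l => by
    simp only [c]; rw [pderiv_comm' i j]
  have c2 : ∀ i j l, c i j l = c l j i := fun i j l => by
    simp only [c]; rw [pderiv_comm' l i]
  have hM : ∀ i j (x : V), eval x (pderiv i (pderiv j f)) = ∑ l, c i j l * x l := by
    intro i j x
    have h1 : (pderiv i (pderiv j f)).IsHomogeneous 1 := hf.pderiv.pderiv
    rw [hom_one h1]
    simp [c, mul_comm]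
  have hfT : ∀ x, tri c x x x = 6 * eval x f := by
    intro x
    have e1 := congrArg (eval x) hf.sum_X_mul_pderiv
    have e2 : ∀ i, ∑ j, x j * eval x (pderiv j (pderiv i f)) = 2 * eval x (pderiv i f) := by
      intro i
      have h2 : (pderiv i f).IsHomogeneous 2 := hf.pderiv
      have := congrArg (eval x) h2.sum_X_mul_pderiv
      simpa using this
    simp only [map_sum, map_mul, eval_X, nsmul_eq_mul, map_natCast] at e1
    have : 6 * eval x f = ∑ i, x i * ∑ j, x j * eval x (pderiv j (pderiv i f)) := by
      simp only [e2]
      simp only [Fin.sum_univ_three] at e1 ⊢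
      push_cast at e1
      linear_combination -2 * e1
    rw [this, tri_apply]
    simp only [hM, Fin.sum_univ_three]
    ring
  have hdet : ∀ x, (Matrix.of fun i j => ∑ l, c i j l * x l).det = k * eval x f := by
    intro x
    have := congrArg (eval x) h
    rw [hessianDet, RingHom.map_det, map_mul, eval_C] at this
    rw [← this]
    congr 1
    ext i j
    simp [hM]
  have hH : ∀ (x : V) (P : Fin 3 → V), (Matrix.of fun i j => tri c x (P i) (P j)).det =
      (k / 6) * (Matrix.of P).det ^ 2 * tri c x x x := by
    intro x P
    have : (Matrix.of fun i j => tri c x (P i) (P j)) =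
        Matrix.of P * (Matrix.of fun i j => ∑ l, c i j l * x l) * (Matrix.of P).transpose := by
      ext i j
      simp only [Matrix.mul_apply, Matrix.of_apply, Matrix.transpose_apply, tri_apply,
        Fin.sum_univ_three]
      ring
    rw [this, Matrix.det_mul, Matrix.det_mul, Matrix.det_transpose, hdet, hfT]
    ring
  have h12 : ∀ x y z, tri c x y z = tri c y x z := by
    intro x y z
    rw [tri_apply, tri_apply, Finset.sum_comm]
    refine Finset.sum_congr rfl fun i _ => Finset.sum_congr rfl fun j _ =>
      Finset.sum_congr rfl fun l _ => ?_
    rw [c1 i l j, c2 l i j, c1 j i l, c2 i j l, c1 l j i]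
    ring
  have h23 : ∀ x y z, tri c x y z = tri c x z y := by
    intro x y z
    rw [tri_apply, tri_apply]
    refine Finset.sum_congr rfl fun i _ => ?_
    rw [Finset.sum_comm]
    refine Finset.sum_congr rfl fun j _ => Finset.sum_congr rfl fun l _ => ?_
    rw [c1 l j i]
    ring
  obtain ⟨l, m, n, hl⟩ := split (tri c) h12 h23 _ hH
  refine ⟨linForm ((1 / 6 : ℂ) • l), linForm m, linForm n, linForm_isLinear _,
    linForm_isLinear _, linForm_isLinear _, ?_⟩
  apply MvPolynomial.funext
  intro x
  simp only [map_mul, eval_linForm, LinearMap.smul_apply, smul_eq_mul]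
  have := hl x
  rw [hfT] at this
  linear_combination this / 6

lemma backward {a b c : MvPolynomial (Fin 3) ℂ} (ha : IsLinearForm a) (hb : IsLinearForm b)
    (hc : IsLinearForm c) : ∃ s : ℂ, hessianDet (a * b * c) = C s * (a * b * c) := by
  have key : ∀ g : MvPolynomial (Fin 3) ℂ, IsLinearForm g →
      ∃ u : Fin 3 → ℂ, ∀ i, pderiv i g = C (u i) := by
    intro g hg
    refine ⟨fun i => coeff 0 (pderiv i g), fun i => ?_⟩
    have h0 : (pderiv i g).IsHomogeneous 0 := IsHomogeneous.pderiv hg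
    rw [← totalDegree_zero_iff_isHomogeneous] at h0
    exact totalDegree_eq_zero_iff_eq_C.1 h0
  obtain ⟨u, hu⟩ := key a ha
  obtain ⟨v, hv⟩ := key b hb
  obtain ⟨w, hw⟩ := key c hc
  refine ⟨2 * (Matrix.of ![u, v, w]).det ^ 2, ?_⟩
  rw [hessianDet, Matrix.det_fin_three, Matrix.det_fin_three]
  simp only [Matrix.of_apply, pderiv_mul, hu, hv, hw, map_add, pderiv_C, Matrix.cons_val,
    map_mul, map_sub, map_pow, map_ofNat]
  ring

end CubicHessian

theorem stmt9 (f : MvPolynomial (Fin 3) ℂ) (hf : f.IsHomogeneous 3) :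
    CompletelyReducible f ↔ ∃ s : ℂ, (hessianDet f) ^ 2 = C s * f ^ 2 := by
  constructor
  · rintro ⟨a, b, c, ha, hb, hc, rfl⟩
    obtain ⟨s, hs⟩ := CubicHessian.backward ha hb hc
    refine ⟨s ^ 2, ?_⟩
    rw [hs, map_pow]
    ring
  · rintro ⟨s, hs⟩
    obtain ⟨d, hd⟩ := IsAlgClosed.exists_pow_nat_eq s (n := 2) (by norm_num)
    have : (hessianDet f - C d * f) * (hessianDet f - C (-d) * f) = 0 := by
      rw [← hd] at hs
      simp only [map_pow, map_neg] at hs ⊢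
      linear_combination hs
    rcases mul_eq_zero.1 this with h | h
    · exact CubicHessian.forward hf (sub_eq_zero.1 h)
    · exact CubicHessian.forward hf (sub_eq_zero.1 h)
end

section
/- Let f be a ternary cubic form over ℂ whose coefficient f₃₃₃ of x₃³ is nonzero. Let D = det(∂ᵢ∂ⱼ f) be the Hessian determinant of f (a cubic form), let D₃₃₃ be its coefficient of x₃³, and set g = D₃₃₃·f − f₃₃₃·D. Then f is completely reducible if and only if the coefficients of x₁²x₃, x₁x₂x₃, x₂²x₃, x₁x₃² and x₂x₃² in g are all zero. -/
open MvPolynomial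

/-- The ternary cubic form with the given ten coefficients. -/
noncomputable def cub (a b c d e k l m n o : ℂ) : MvPolynomial (Fin 3) ℂ :=
  C a * X 0 ^ 3 + C b * X 0 ^ 2 * X 1 + C c * X 0 * X 1 ^ 2 + C d * X 1 ^ 3
  + C e * X 0 ^ 2 * X 2 + C k * X 0 * X 1 * X 2 + C l * X 1 ^ 2 * X 2
  + C m * X 0 * X 2 ^ 2 + C n * X 1 * X 2 ^ 2 + C o * X 2 ^ 3

/-- exponent vector -/
noncomputable def ex (i j k : ℕ) : Fin 3 →₀ ℕ :=
  Finsupp.single 0 i + Finsupp.single 1 j + Finsupp.single 2 k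

lemma ex_eq_iff (i j k iz jz kz : ℕ) : ex i j k = ex iz jz kz ↔ i = iz ∧ j = jz ∧ k = kz := by
  constructor
  · intro h
    have h0 := DFunLike.congr_fun h 0
    have h1 := DFunLike.congr_fun h 1
    have h2 := DFunLike.congr_fun h 2
    simp [ex] at h0 h1 h2
    exact ⟨h0, h1, h2⟩
  · rintro ⟨rfl, rfl, rfl⟩; rfl

lemma eq_ex (m : Fin 3 →₀ ℕ) : m = ex (m 0) (m 1) (m 2) := by
  ext i; fin_cases i <;> simp [ex]

lemma mon_ex (i j k : ℕ) (a : ℂ) :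
    monomial (ex i j k) a = C a * X 0 ^ i * X 1 ^ j * X 2 ^ k := by
  rw [ex, X_pow_eq_monomial, X_pow_eq_monomial, X_pow_eq_monomial, C_mul_monomial,
    monomial_mul, monomial_mul]
  simp

lemma cub_eq (a b c d e k l m n o : ℂ) : cub a b c d e k l m n o =
    monomial (ex 3 0 0) a + monomial (ex 2 1 0) b + monomial (ex 1 2 0) c + monomial (ex 0 3 0) d
    + monomial (ex 2 0 1) e + monomial (ex 1 1 1) k + monomial (ex 0 2 1) l
    + monomial (ex 1 0 2) m + monomial (ex 0 1 2) n + monomial (ex 0 0 3) o := by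
  simp only [mon_ex, cub]; ring

lemma coeff_cub (a b c d e k l m n o : ℂ) :
    (cub a b c d e k l m n o).coeff (Finsupp.single 0 2 + Finsupp.single 2 1) = e ∧
    (cub a b c d e k l m n o).coeff
      (Finsupp.single 0 1 + Finsupp.single 1 1 + Finsupp.single 2 1) = k ∧
    (cub a b c d e k l m n o).coeff (Finsupp.single 1 2 + Finsupp.single 2 1) = l ∧
    (cub a b c d e k l m n o).coeff (Finsupp.single 0 1 + Finsupp.single 2 2) = m ∧
    (cub a b c d e k l m n o).coeff (Finsupp.single 1 1 + Finsupp.single 2 2) = n ∧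
    (cub a b c d e k l m n o).coeff (Finsupp.single 2 3) = o := by
  have e1 : (Finsupp.single 0 2 + Finsupp.single 2 1 : Fin 3 →₀ ℕ) = ex 2 0 1 := by simp [ex]
  have e2 : (Finsupp.single 0 1 + Finsupp.single 1 1 + Finsupp.single 2 1 : Fin 3 →₀ ℕ)
      = ex 1 1 1 := by simp [ex]
  have e3 : (Finsupp.single 1 2 + Finsupp.single 2 1 : Fin 3 →₀ ℕ) = ex 0 2 1 := by simp [ex]
  have e4 : (Finsupp.single 0 1 + Finsupp.single 2 2 : Fin 3 →₀ ℕ) = ex 1 0 2 := by simp [ex]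
  have e5 : (Finsupp.single 1 1 + Finsupp.single 2 2 : Fin 3 →₀ ℕ) = ex 0 1 2 := by simp [ex]
  have e6 : (Finsupp.single 2 3 : Fin 3 →₀ ℕ) = ex 0 0 3 := by simp [ex]
  rw [e1, e2, e3, e4, e5, e6, cub_eq]
  simp [coeff_add, coeff_monomial, ex_eq_iff]

lemma hom3 (f : MvPolynomial (Fin 3) ℂ) (hf : f.IsHomogeneous 3) :
    ∃ a b c d e k l m n o, f = cub a b c d e k l m n o := by
  refine ⟨f.coeff (ex 3 0 0), f.coeff (ex 2 1 0), f.coeff (ex 1 2 0), f.coeff (ex 0 3 0),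
    f.coeff (ex 2 0 1), f.coeff (ex 1 1 1), f.coeff (ex 0 2 1), f.coeff (ex 1 0 2),
    f.coeff (ex 0 1 2), f.coeff (ex 0 0 3), ?_⟩
  rw [cub_eq]
  ext v
  rw [eq_ex v]
  generalize v 0 = i, v 1 = j, v 2 = k
  by_cases h : i + j + k = 3
  · have hi : i ≤ 3 := by omega
    have hj : j ≤ 3 := by omega
    obtain rfl : k = 3 - i - j := by omega
    interval_cases i <;> interval_cases j <;>
      first
      | (exfalso; omega)
      | simp [coeff_add, coeff_monomial, ex_eq_iff]
  · rw [hf.coeff_eq_zero]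
    · simp only [coeff_add, coeff_monomial, ex_eq_iff]
      repeat rw [if_neg (by omega)]
      simp
    · simpa [Finsupp.degree_eq_sum, Fin.sum_univ_three, ex] using h

lemma hom1 (f : MvPolynomial (Fin 3) ℂ) (hf : f.IsHomogeneous 1) :
    ∃ a b c, f = C a * X 0 + C b * X 1 + C c * X 2 := by
  refine ⟨f.coeff (ex 1 0 0), f.coeff (ex 0 1 0), f.coeff (ex 0 0 1), ?_⟩
  have : ∀ a b c : ℂ, C a * X 0 + C b * X 1 + C c * X 2 = monomial (ex 1 0 0) a +
    monomial (ex 0 1 0) b + monomial (ex 0 0 1) c := by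
    intro a b c; simp only [mon_ex]; ring
  rw [this]
  ext v
  rw [eq_ex v]
  generalize v 0 = i, v 1 = j, v 2 = k
  by_cases h : i + j + k = 1
  · have hi : i ≤ 1 := by omega
    have hj : j ≤ 1 := by omega
    obtain rfl : k = 1 - i - j := by omega
    interval_cases i <;> interval_cases j <;>
      first
      | (exfalso; omega)
      | simp [coeff_add, coeff_monomial, ex_eq_iff]
  · rw [hf.coeff_eq_zero]
    · simp only [coeff_add, coeff_monomial, ex_eq_iff]
      repeat rw [if_neg (by omega)]
      simp
    · simpa [Finsupp.degree_eq_sum, Fin.sum_univ_three, ex] using h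

lemma lin_hom (a b c : ℂ) :
    IsLinearForm (C a * X 0 + C b * X 1 + C c * X 2 : MvPolynomial (Fin 3) ℂ) := by
  unfold IsLinearForm
  have h : ∀ (a : ℂ) (i : Fin 3), (C a * X i : MvPolynomial (Fin 3) ℂ).IsHomogeneous 1 := by
    intro a i
    simpa using (isHomogeneous_C (Fin 3) a).mul (isHomogeneous_X ℂ i)
  exact ((h a 0).add (h b 1)).add (h c 2)

lemma pd (i j : Fin 3) : pderiv i (X j : MvPolynomial (Fin 3) ℂ) = if i = j then 1 else 0 := by
  rw [pderiv_X, Pi.single_apply]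
  simp only [eq_comm]

lemma hess_prod (a b c aw bw cw az bz cz : ℂ) (U V W : MvPolynomial (Fin 3) ℂ)
    (hU : U = C a * X 0 + C b * X 1 + C c * X 2)
    (hV : V = C aw * X 0 + C bw * X 1 + C cw * X 2)
    (hW : W = C az * X 0 + C bz * X 1 + C cz * X 2) :
    hessianDet (U * V * W) =
    C (2 * (a * (bw * cz - cw * bz) - b * (aw * cz - cw * az) + c * (aw * bz - bw * az)) ^ 2)
    * (U * V * W) := by
  have h2 : (C 2 : MvPolynomial (Fin 3) ℂ) = 2 := map_ofNat C 2
  have u0 : pderiv 0 U = C a := by simp [hU]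
  have u1 : pderiv 1 U = C b := by simp [hU]
  have u2 : pderiv 2 U = C c := by simp [hU]
  have v0 : pderiv 0 V = C aw := by simp [hV]
  have v1 : pderiv 1 V = C bw := by simp [hV]
  have v2 : pderiv 2 V = C cw := by simp [hV]
  have w0 : pderiv 0 W = C az := by simp [hW]
  have w1 : pderiv 1 W = C bz := by simp [hW]
  have w2 : pderiv 2 W = C cz := by simp [hW]
  clear hU hV hW
  simp only [hessianDet, Matrix.det_fin_three, Matrix.of_apply, pderiv_mul, map_add, pderiv_C,
    u0, u1, u2, v0, v1, v2, w0, w1, w2,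
    map_mul, map_sub, map_pow, h2, zero_mul, mul_zero, zero_add, add_zero]
  ring

lemma hess_dep (F s t p1 p2 p3 q0 q1 q2 q3 : ℂ) (Z : MvPolynomial (Fin 3) ℂ)
    (hZ : Z = X 2 + C s * X 0 + C t * X 1) :
    hessianDet (C F * (Z * Z * Z + (C p1 * X 0 * X 0 + C p2 * X 0 * X 1 + C p3 * X 1 * X 1) * Z
      + (C q0 * X 0 * X 0 * X 0 + C q1 * X 0 * X 0 * X 1 + C q2 * X 0 * X 1 * X 1
        + C q3 * X 1 * X 1 * X 1))) =
    C F ^ 3 * (6 * (4 * C p1 * C p3 - C p2 ^ 2) * Z ^ 3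
      + 24 * ((C p1 * C q2 + 3 * C p3 * C q0 - C p2 * C q1) * X 0
          + (3 * C p1 * C q3 + C p3 * C q1 - C p2 * C q2) * X 1) * Z ^ 2
      + (6 * ((6 * C q0 * X 0 + 2 * C q1 * X 1) * (2 * C q2 * X 0 + 6 * C q3 * X 1)
          - (2 * C q1 * X 0 + 2 * C q2 * X 1) ^ 2)
        - 2 * (4 * C p1 * C p3 - C p2 ^ 2) *
          (C p1 * X 0 * X 0 + C p2 * X 0 * X 1 + C p3 * X 1 * X 1)) * Z
      - ((2 * C p1 * X 0 + C p2 * X 1) ^ 2 * (2 * C q2 * X 0 + 6 * C q3 * X 1)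
        - 2 * (2 * C p1 * X 0 + C p2 * X 1) * (C p2 * X 0 + 2 * C p3 * X 1)
            * (2 * C q1 * X 0 + 2 * C q2 * X 1)
        + (C p2 * X 0 + 2 * C p3 * X 1) ^ 2 * (6 * C q0 * X 0 + 2 * C q1 * X 1))) := by
  have z0 : pderiv 0 Z = C s := by simp [hZ]
  have z1 : pderiv 1 Z = C t := by simp [hZ]
  have z2 : pderiv 2 Z = 1 := by simp [hZ]
  clear hZ
  simp only [hessianDet, Matrix.det_fin_three, Matrix.of_apply, pderiv_mul, map_add, pderiv_C, pd,
    z0, z1, z2, Fin.reduceEq, if_true, if_false, zero_mul, mul_zero, mul_one,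
    zero_add, add_zero, map_zero, map_one, pderiv_one]
  ring

lemma cubic_roots (P Q : ℂ) : ∃ a b c : ℂ, a + b + c = 0 ∧ a * b + b * c + c * a = P ∧
    a * b * c = Q := by
  obtain ⟨a, ha⟩ := IsAlgClosed.exists_root
    (Polynomial.X ^ 3 + Polynomial.C P * Polynomial.X - Polynomial.C Q : Polynomial ℂ) (by
      have : (Polynomial.X ^ 3 + Polynomial.C P * Polynomial.X - Polynomial.C Q
        : Polynomial ℂ).degree = 3 := by compute_degree!
      rw [this]; decide)
  simp [Polynomial.IsRoot] at ha
  obtain ⟨w, hw⟩ := IsAlgClosed.exists_pow_nat_eq (a ^ 2 - 4 * (P + a ^ 2)) (n := 2) (by norm_num)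
  refine ⟨a, (-a + w) / 2, (-a - w) / 2, by ring, ?_, ?_⟩
  · linear_combination -hw / 4
  · linear_combination ha - a * hw / 4

lemma quad_factor (p1 p2 p3 : ℂ) : ∃ l1 l2 m1 m2 : ℂ, p1 = l1 * m1 ∧ p2 = l1 * m2 + l2 * m1 ∧
    p3 = l2 * m2 := by
  by_cases h : p1 = 0
  · exact ⟨0, 1, p2, p3, by simp [h], by ring, by ring⟩
  · obtain ⟨w, hw⟩ := IsAlgClosed.exists_pow_nat_eq (p2 ^ 2 - 4 * p1 * p3) (n := 2) (by norm_num)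
    refine ⟨1, (p2 - w) / (2 * p1), p1, (p2 + w) / 2, by ring, by field_simp; ring, ?_⟩
    field_simp
    linear_combination hw

/-- Splitting of the depressed cubic. -/
def Spl (p1 p2 p3 q0 q1 q2 q3 : ℂ) : Prop :=
  ∃ a1 b1 a2 b2 a3 b3 : ℂ, a1 + a2 + a3 = 0 ∧ b1 + b2 + b3 = 0 ∧
    p1 = a1 * a2 + a2 * a3 + a3 * a1 ∧
    p2 = a1 * b2 + a2 * b1 + a2 * b3 + a3 * b2 + a3 * b1 + a1 * b3 ∧
    p3 = b1 * b2 + b2 * b3 + b3 * b1 ∧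
    q0 = a1 * a2 * a3 ∧ q1 = a1 * a2 * b3 + a1 * b2 * a3 + b1 * a2 * a3 ∧
    q2 = a1 * b2 * b3 + b1 * a2 * b3 + b1 * b2 * a3 ∧ q3 = b1 * b2 * b3

lemma exists_omega : ∃ w : ℂ, w ^ 2 = - w - 1 := by
  obtain ⟨w, hw⟩ := IsAlgClosed.exists_pow_nat_eq (-3 : ℂ) (n := 2) (by norm_num)
  exact ⟨(-1 + w) / 2, by linear_combination hw / 4⟩

lemma spl_nondeg (l1 l2 m1 m2 q0 q1 q2 q3 : ℂ) (hd : l1 * m2 - l2 * m1 ≠ 0)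
    (e1 : l1 * m1 * q2 + 3 * (l2 * m2) * q0 - (l1 * m2 + l2 * m1) * q1 = 0)
    (e2 : 3 * (l1 * m1) * q3 + l2 * m2 * q1 - (l1 * m2 + l2 * m1) * q2 = 0)
    (h1 : 3 * (3 * q0 * q2 - q1 ^ 2) = - (l1 * m2 - l2 * m1) ^ 2 * (l1 * m1))
    (h2 : 3 * (9 * q0 * q3 - q1 * q2) = - (l1 * m2 - l2 * m1) ^ 2 * (l1 * m2 + l2 * m1))
    (h3 : 3 * (3 * q1 * q3 - q2 ^ 2) = - (l1 * m2 - l2 * m1) ^ 2 * (l2 * m2)) :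
    Spl (l1 * m1) (l1 * m2 + l2 * m1) (l2 * m2) q0 q1 q2 q3 := by
  obtain ⟨d, hdd⟩ : ∃ d, d = l1 * m2 - l2 * m1 := ⟨_, rfl⟩
  rw [← hdd] at hd h1 h2 h3
  obtain ⟨α, γ, δ, β, g0, g1, g2, g3⟩ : ∃ α γ δ β : ℂ,
      q0 = α * l1 ^ 3 + γ * l1 ^ 2 * m1 + δ * l1 * m1 ^ 2 + β * m1 ^ 3 ∧
      q1 = 3 * α * l1 ^ 2 * l2 + γ * (l1 ^ 2 * m2 + 2 * l1 * l2 * m1)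
        + δ * (l2 * m1 ^ 2 + 2 * l1 * m1 * m2) + 3 * β * m1 ^ 2 * m2 ∧
      q2 = 3 * α * l1 * l2 ^ 2 + γ * (l2 ^ 2 * m1 + 2 * l1 * l2 * m2)
        + δ * (l1 * m2 ^ 2 + 2 * l2 * m1 * m2) + 3 * β * m1 * m2 ^ 2 ∧
      q3 = α * l2 ^ 3 + γ * l2 ^ 2 * m2 + δ * l2 * m2 ^ 2 + β * m2 ^ 3 := by
    refine ⟨(q0 * m2 ^ 3 - q1 * m2 ^ 2 * m1 + q2 * m2 * m1 ^ 2 - q3 * m1 ^ 3) / d ^ 3,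
      (-3 * q0 * m2 ^ 2 * l2 + q1 * (m2 ^ 2 * l1 + 2 * m2 * l2 * m1)
        - q2 * (l2 * m1 ^ 2 + 2 * m2 * m1 * l1) + 3 * q3 * m1 ^ 2 * l1) / d ^ 3,
      (3 * q0 * m2 * l2 ^ 2 - q1 * (l2 ^ 2 * m1 + 2 * m2 * l2 * l1)
        + q2 * (m2 * l1 ^ 2 + 2 * l2 * m1 * l1) - 3 * q3 * m1 * l1 ^ 2) / d ^ 3,
      (-q0 * l2 ^ 3 + q1 * l2 ^ 2 * l1 - q2 * l2 * l1 ^ 2 + q3 * l1 ^ 3) / d ^ 3, ?_, ?_, ?_, ?_⟩ <;>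
    · field_simp
      rw [hdd]
      ring
  subst g0 g1 g2 g3
  have k1 : d ^ 2 * (γ * l1 + δ * m1) = 0 := by rw [hdd]; linear_combination -e1
  have k2 : d ^ 2 * (γ * l2 + δ * m2) = 0 := by rw [hdd]; linear_combination -e2
  have hγ : γ = 0 := by
    have : d ^ 3 * γ = 0 := by linear_combination m2 * k1 - m1 * k2 + d ^ 2 * γ * hdd
    simpa [hd] using this
  have hδ : δ = 0 := by
    have : d ^ 3 * δ = 0 := by linear_combination l1 * k2 - l2 * k1 + d ^ 2 * δ * hdd
    simpa [hd] using this
  subst hγ hδ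
  have hαβ : 27 * (α * β) = -1 := by
    have c1 : d ^ 2 * (27 * (α * β) + 1) * (l1 * m1) = 0 := by
      rw [hdd] at h1 ⊢; linear_combination 3 * h1 - 2 * h1
    have c2 : d ^ 2 * (27 * (α * β) + 1) * (l1 * m2 + l2 * m1) = 0 := by
      rw [hdd] at h2 ⊢; linear_combination h2
    have c3 : d ^ 2 * (27 * (α * β) + 1) * (l2 * m2) = 0 := by
      rw [hdd] at h3 ⊢; linear_combination h3
    have c : (d ^ 2 * (27 * (α * β) + 1)) * d ^ 2 = 0 := by
      rw [hdd] at c1 c2 c3 ⊢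
      linear_combination (l1 * m2 + l2 * m1) * c2 - 4 * (l2 * m2) * c1
    have : 27 * (α * β) + 1 = 0 := by simpa [hd] using c
    linear_combination this
  obtain ⟨a, ha⟩ := IsAlgClosed.exists_pow_nat_eq α (n := 3) (by norm_num)
  have ha0 : a ≠ 0 := by rintro rfl; simp [← ha] at hαβ
  obtain ⟨b, hb⟩ : ∃ b, b = -1 / (3 * a) := ⟨_, rfl⟩
  have hab : 3 * (a * b) = -1 := by rw [hb]; field_simp
  have hb3 : β = b ^ 3 := by
    have : a ^ 3 * (β - b ^ 3) = 0 := by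
      rw [← ha] at hαβ
      linear_combination hαβ / 27 - (9 * (a * b) ^ 2 - 3 * (a * b) + 1) * hab / 27
    have := (mul_eq_zero.mp this).resolve_left (pow_ne_zero 3 ha0)
    linear_combination this
  subst hb3
  subst ha
  clear hb hαβ h1 h2 h3 e1 e2 k1 k2
  obtain ⟨w, hw⟩ := exists_omega
  have hw3 : w ^ 3 = 1 := by linear_combination (w - 1) * hw
  have hw4 : w ^ 4 = w := by linear_combination w * hw3
  have habz : a * b = -1 / 3 := by linear_combination hab / 3
  refine ⟨a * l1 + b * m1, a * l2 + b * m2, w * a * l1 + (-w - 1) * b * m1,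
    w * a * l2 + (-w - 1) * b * m2, (-w - 1) * a * l1 + w * b * m1,
    (-w - 1) * a * l2 + w * b * m2, by ring, by ring, ?_, ?_, ?_, ?_, ?_, ?_, ?_⟩ <;>
  grind

lemma spl_deg (u v q0 q1 q2 q3 : ℂ)
    (e1 : u ^ 2 * q2 + 3 * v ^ 2 * q0 - 2 * u * v * q1 = 0)
    (e2 : 3 * u ^ 2 * q3 + v ^ 2 * q1 - 2 * u * v * q2 = 0)
    (h1 : 3 * q0 * q2 = q1 ^ 2) (h2 : 9 * q0 * q3 = q1 * q2) (h3 : 3 * q1 * q3 = q2 ^ 2) :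
    Spl (u ^ 2) (2 * u * v) (v ^ 2) q0 q1 q2 q3 := by
  obtain ⟨r, s, g0, g1, g2, g3⟩ : ∃ r s : ℂ, q0 = r ^ 3 ∧ q1 = 3 * r ^ 2 * s ∧
      q2 = 3 * r * s ^ 2 ∧ q3 = s ^ 3 := by
    by_cases h : q0 = 0
    · obtain ⟨s, hs⟩ := IsAlgClosed.exists_pow_nat_eq q3 (n := 3) (by norm_num)
      have hq1 : q1 = 0 := by
        have : q1 ^ 2 = 0 := by rw [← h1, h]; ring
        simpa using this
      have hq2 : q2 = 0 := by
        have : q2 ^ 2 = 0 := by rw [← h3, hq1]; ring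
        simpa using this
      exact ⟨0, s, by simp [h], by simp [hq1], by simp [hq2], hs.symm⟩
    · obtain ⟨r, hr⟩ := IsAlgClosed.exists_pow_nat_eq q0 (n := 3) (by norm_num)
      have hr0 : r ≠ 0 := by rintro rfl; simp at hr; exact h hr.symm
      obtain ⟨s, hs⟩ : ∃ s, s = q1 / (3 * r ^ 2) := ⟨_, rfl⟩
      have hq1 : q1 = 3 * r ^ 2 * s := by rw [hs]; field_simp
      subst hr
      subst hq1
      have hq2 : q2 = 3 * r * s ^ 2 := by
        have : r ^ 3 * (q2 - 3 * r * s ^ 2) = 0 := by linear_combination h1 / 3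
        have := (mul_eq_zero.mp this).resolve_left h
        linear_combination this
      subst hq2
      have hq3 : q3 = s ^ 3 := by
        have : r ^ 3 * (q3 - s ^ 3) = 0 := by linear_combination h2 / 9
        have := (mul_eq_zero.mp this).resolve_left h
        linear_combination this
      exact ⟨r, s, rfl, rfl, rfl, hq3⟩
  subst g0 g1 g2 g3
  clear h1 h2 h3
  by_cases hrs : r = 0 ∧ s = 0
  · obtain ⟨rfl, rfl⟩ := hrs
    have hI := Complex.I_sq
    refine ⟨0, 0, Complex.I * u, Complex.I * v, - Complex.I * u, - Complex.I * v, ?_⟩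
    refine ⟨by ring, by ring, ?_, ?_, ?_, by ring, by ring, by ring, by ring⟩
    · linear_combination u ^ 2 * hI
    · linear_combination 2 * u * v * hI
    · linear_combination v ^ 2 * hI
  · have k : u * s - v * r = 0 := by
      by_contra hk
      apply hrs
      have k1 : r * (u * s - v * r) ^ 2 = 0 := by linear_combination e1 / 3
      have k2 : s * (u * s - v * r) ^ 2 = 0 := by linear_combination e2 / 3
      simpa [hk] using And.intro k1 k2
    obtain ⟨c, hu, hv⟩ : ∃ c, u = c * r ∧ v = c * s := by
      by_cases hr : r = 0
      · have hs : s ≠ 0 := fun hs => hrs ⟨hr, hs⟩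
        subst hr
        refine ⟨v / s, ?_, by field_simp⟩
        simpa [hs] using k
      · refine ⟨u / r, by field_simp, ?_⟩
        field_simp
        linear_combination -k
    subst hu hv
    obtain ⟨x, y, z, h1, h2, h3⟩ := cubic_roots (c ^ 2) 1
    refine ⟨x * r, x * s, y * r, y * s, z * r, z * s, ?_⟩
    refine ⟨?_, ?_, ?_, ?_, ?_, ?_, ?_, ?_, ?_⟩
    · linear_combination r * h1
    · linear_combination s * h1
    · linear_combination -r ^ 2 * h2
    · linear_combination -2 * r * s * h2
    · linear_combination -s ^ 2 * h2
    · linear_combination -r ^ 3 * h3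
    · linear_combination -3 * r ^ 2 * s * h3
    · linear_combination -3 * r * s ^ 2 * h3
    · linear_combination -s ^ 3 * h3

lemma spl_main (p1 p2 p3 q0 q1 q2 q3 : ℂ)
    (e1 : p1 * q2 + 3 * p3 * q0 - p2 * q1 = 0)
    (e2 : 3 * p1 * q3 + p3 * q1 - p2 * q2 = 0)
    (h1 : 3 * (3 * q0 * q2 - q1 ^ 2) = (4 * p1 * p3 - p2 ^ 2) * p1)
    (h2 : 3 * (9 * q0 * q3 - q1 * q2) = (4 * p1 * p3 - p2 ^ 2) * p2)
    (h3 : 3 * (3 * q1 * q3 - q2 ^ 2) = (4 * p1 * p3 - p2 ^ 2) * p3) :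
    Spl p1 p2 p3 q0 q1 q2 q3 := by
  by_cases h : 4 * p1 * p3 - p2 ^ 2 = 0
  · obtain ⟨u, v, rfl, rfl, rfl⟩ : ∃ u v : ℂ, p1 = u ^ 2 ∧ p2 = 2 * u * v ∧ p3 = v ^ 2 := by
      by_cases hp : p1 = 0
      · obtain ⟨v, hv⟩ := IsAlgClosed.exists_pow_nat_eq p3 (n := 2) (by norm_num)
        have : p2 = 0 := by simpa [hp] using h
        exact ⟨0, v, by simp [hp], by simp [this], hv.symm⟩
      · obtain ⟨u, hu⟩ := IsAlgClosed.exists_pow_nat_eq p1 (n := 2) (by norm_num)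
        have hu0 : u ≠ 0 := by rintro rfl; simp at hu; exact hp hu.symm
        subst hu
        refine ⟨u, p2 / (2 * u), rfl, by field_simp, ?_⟩
        field_simp
        linear_combination h
    rw [h] at h1 h2 h3
    apply spl_deg
    · linear_combination e1
    · linear_combination e2
    · linear_combination h1 / 3
    · linear_combination h2 / 3
    · linear_combination h3 / 3
  · obtain ⟨l1, l2, m1, m2, rfl, rfl, rfl⟩ := quad_factor p1 p2 p3
    apply spl_nondeg
    · intro hd
      apply h
      linear_combination -(l1 * m2 - l2 * m1) * hd
    · linear_combination e1
    · linear_combination e2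
    · linear_combination h1
    · linear_combination h2
    · linear_combination h3

theorem stmt17 (f : MvPolynomial (Fin 3) ℂ) (hf : f.IsHomogeneous 3)
    (h333 : f.coeff (Finsupp.single 2 3) ≠ 0) :
    CompletelyReducible f ↔
      ∀ g : MvPolynomial (Fin 3) ℂ,
        g = C ((hessianDet f).coeff (Finsupp.single 2 3)) * f -
              C (f.coeff (Finsupp.single 2 3)) * hessianDet f →
        g.coeff (Finsupp.single 0 2 + Finsupp.single 2 1) = 0 ∧
        g.coeff (Finsupp.single 0 1 + Finsupp.single 1 1 + Finsupp.single 2 1) = 0 ∧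
        g.coeff (Finsupp.single 1 2 + Finsupp.single 2 1) = 0 ∧
        g.coeff (Finsupp.single 0 1 + Finsupp.single 2 2) = 0 ∧
        g.coeff (Finsupp.single 1 1 + Finsupp.single 2 2) = 0 := by
  constructor
  · rintro ⟨a, b, c, ha, hb, hc, hfe⟩ g hg
    obtain ⟨a1, a2, a3, rfl⟩ := hom1 a ha
    obtain ⟨b1, b2, b3, rfl⟩ := hom1 b hb
    obtain ⟨c1, c2, c3, rfl⟩ := hom1 c hc
    have hD := hess_prod a1 a2 a3 b1 b2 b3 c1 c2 c3 _ _ _ rfl rfl rfl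
    rw [← hfe] at hD
    have hg0 : g = 0 := by
      rw [hg, hD, coeff_C_mul, C_mul]
      ring
    simp [hg0]
  · intro H
    have H := H _ rfl
    obtain ⟨a, b, c, d, e, k, l, m, n, F, hfc⟩ := hom3 f hf
    have hF : f.coeff (Finsupp.single 2 3) = F := by
      rw [hfc]; exact (coeff_cub _ _ _ _ _ _ _ _ _ _).2.2.2.2.2
    rw [hF] at h333 H
    obtain ⟨s, t, p1, p2, p3, q0, q1, q2, q3, rfl, rfl, rfl, rfl, rfl, rfl, rfl, rfl, rfl⟩ :
      ∃ s t p1 p2 p3 q0 q1 q2 q3 : ℂ, m = F * (3 * s) ∧ n = F * (3 * t) ∧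
        e = F * (3 * s ^ 2 + p1) ∧ k = F * (6 * s * t + p2) ∧ l = F * (3 * t ^ 2 + p3) ∧
        a = F * (s ^ 3 + p1 * s + q0) ∧ b = F * (3 * s ^ 2 * t + p1 * t + p2 * s + q1) ∧
        c = F * (3 * s * t ^ 2 + p2 * t + p3 * s + q2) ∧ d = F * (t ^ 3 + p3 * t + q3) := by
      have solve : ∀ x y : ℂ, ∃ z, x = F * (y + z) := fun x y =>
        ⟨x / F - y, by field_simp; ring⟩
      obtain ⟨s, hs⟩ : ∃ s, m = F * (3 * s) := ⟨m / F / 3, by field_simp⟩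
      obtain ⟨t, ht⟩ : ∃ s, n = F * (3 * s) := ⟨n / F / 3, by field_simp⟩
      obtain ⟨p1, hp1⟩ := solve e (3 * s ^ 2)
      obtain ⟨p2, hp2⟩ := solve k (6 * s * t)
      obtain ⟨p3, hp3⟩ := solve l (3 * t ^ 2)
      obtain ⟨q0, hq0⟩ := solve a (s ^ 3 + p1 * s)
      obtain ⟨q1, hq1⟩ := solve b (3 * s ^ 2 * t + p1 * t + p2 * s)
      obtain ⟨q2, hq2⟩ := solve c (3 * s * t ^ 2 + p2 * t + p3 * s)
      obtain ⟨q3, hq3⟩ := solve d (t ^ 3 + p3 * t)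
      exact ⟨s, t, p1, p2, p3, q0, q1, q2, q3, hs, ht, hp1, hp2, hp3, hq0, hq1, hq2, hq3⟩
    have hD := hess_dep F s t p1 p2 p3 q0 q1 q2 q3 _ rfl
    have n2 : (C 2 : MvPolynomial (Fin 3) ℂ) = 2 := map_ofNat C 2
    have n3 : (C 3 : MvPolynomial (Fin 3) ℂ) = 3 := map_ofNat C 3
    have n4 : (C 4 : MvPolynomial (Fin 3) ℂ) = 4 := map_ofNat C 4
    have n6 : (C 6 : MvPolynomial (Fin 3) ℂ) = 6 := map_ofNat C 6
    have n9 : (C 9 : MvPolynomial (Fin 3) ℂ) = 9 := map_ofNat C 9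
    have n8 : (C 8 : MvPolynomial (Fin 3) ℂ) = 8 := map_ofNat C 8
    have n24 : (C 24 : MvPolynomial (Fin 3) ℂ) = 24 := map_ofNat C 24
    have hfd : f = (C F * ((X 2 + C s * X 0 + C t * X 1) * (X 2 + C s * X 0 + C t * X 1) * (X 2 + C s * X 0 + C t * X 1) + (C p1 * X 0 * X 0 + C p2 * X 0 * X 1 + C p3 * X 1 * X 1) * (X 2 + C s * X 0 + C t * X 1)
      + (C q0 * X 0 * X 0 * X 0 + C q1 * X 0 * X 0 * X 1 + C q2 * X 0 * X 1 * X 1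
        + C q3 * X 1 * X 1 * X 1))) := by
      rw [hfc, cub]
      simp only [map_add, map_mul, map_pow, n3, n6]
      ring
    rw [← hfd] at hD
    -- the coefficients (in powers of Z) of the Hessian
    obtain ⟨A1, hA1⟩ : ∃ A, A = p1 * q2 + 3 * p3 * q0 - p2 * q1 := ⟨_, rfl⟩
    obtain ⟨A2, hA2⟩ : ∃ A, A = 3 * p1 * q3 + p3 * q1 - p2 * q2 := ⟨_, rfl⟩
    obtain ⟨h, hh⟩ : ∃ h, h = 4 * p1 * p3 - p2 ^ 2 := ⟨_, rfl⟩
    obtain ⟨B1, hB1⟩ : ∃ B, B = 24 * (3 * q0 * q2 - q1 ^ 2) - 2 * h * p1 := ⟨_, rfl⟩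
    obtain ⟨B2, hB2⟩ : ∃ B, B = 24 * (9 * q0 * q3 - q1 * q2) - 2 * h * p2 := ⟨_, rfl⟩
    obtain ⟨B3, hB3⟩ : ∃ B, B = 24 * (3 * q1 * q3 - q2 ^ 2) - 2 * h * p3 := ⟨_, rfl⟩
    obtain ⟨x0, x1, x2, x3, hDc⟩ : ∃ x0 x1 x2 x3, hessianDet f = cub x0 x1 x2 x3
        (F ^ 3 * (18 * h * s ^ 2 + 48 * A1 * s + B1))
        (F ^ 3 * (36 * h * s * t + 48 * (A1 * t + A2 * s) + B2))
        (F ^ 3 * (18 * h * t ^ 2 + 48 * A2 * t + B3))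
        (F ^ 3 * (18 * h * s + 24 * A1)) (F ^ 3 * (18 * h * t + 24 * A2)) (F ^ 3 * (6 * h)) := by
      have n18 : (C 18 : MvPolynomial (Fin 3) ℂ) = 18 := map_ofNat C 18
      have n36 : (C 36 : MvPolynomial (Fin 3) ℂ) = 36 := map_ofNat C 36
      have n48 : (C 48 : MvPolynomial (Fin 3) ℂ) = 48 := map_ofNat C 48
      refine ⟨F ^ 3 * (6 * h * s ^ 3 + 24 * A1 * s ^ 2 + B1 * s
          - (4 * p1 ^ 2 * (2 * q2) - 4 * p1 * p2 * (2 * q1) + p2 ^ 2 * (6 * q0))),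
        F ^ 3 * (18 * h * s ^ 2 * t + 24 * (2 * A1 * s * t + A2 * s ^ 2) + B1 * t + B2 * s
          - (4 * p1 ^ 2 * (6 * q3) + 4 * p1 * p2 * (2 * q2)
            - 2 * (2 * p1 * p2 * (2 * q2) + (4 * p1 * p3 + p2 ^ 2) * (2 * q1))
            + p2 ^ 2 * (2 * q1) + 4 * p2 * p3 * (6 * q0))),
        F ^ 3 * (18 * h * s * t ^ 2 + 24 * (A1 * t ^ 2 + 2 * A2 * s * t) + B2 * t + B3 * s
          - (p2 ^ 2 * (2 * q2) + 4 * p1 * p2 * (6 * q3)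
            - 2 * (2 * p2 * p3 * (2 * q1) + (4 * p1 * p3 + p2 ^ 2) * (2 * q2))
            + 4 * p3 ^ 2 * (6 * q0) + 4 * p2 * p3 * (2 * q1))),
        F ^ 3 * (6 * h * t ^ 3 + 24 * A2 * t ^ 2 + B3 * t
          - (p2 ^ 2 * (6 * q3) - 4 * p2 * p3 * (2 * q2) + 4 * p3 ^ 2 * (2 * q1))), ?_⟩
      rw [hD, cub, hB1, hB2, hB3, hA1, hA2, hh]
      simp only [map_add, map_sub, map_mul, map_pow, n2, n3, n4, n6, n9, n18, n24, n36, n48]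
      ring
    have cf := coeff_cub (F * (s ^ 3 + p1 * s + q0)) (F * (3 * s ^ 2 * t + p1 * t + p2 * s + q1))
      (F * (3 * s * t ^ 2 + p2 * t + p3 * s + q2)) (F * (t ^ 3 + p3 * t + q3))
      (F * (3 * s ^ 2 + p1)) (F * (6 * s * t + p2)) (F * (3 * t ^ 2 + p3))
      (F * (3 * s)) (F * (3 * t)) F
    rw [← hfc] at cf
    have cD := coeff_cub x0 x1 x2 x3
        (F ^ 3 * (18 * h * s ^ 2 + 48 * A1 * s + B1))
        (F ^ 3 * (36 * h * s * t + 48 * (A1 * t + A2 * s) + B2))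
        (F ^ 3 * (18 * h * t ^ 2 + 48 * A2 * t + B3))
        (F ^ 3 * (18 * h * s + 24 * A1)) (F ^ 3 * (18 * h * t + 24 * A2)) (F ^ 3 * (6 * h))
    rw [← hDc] at cD
    obtain ⟨f1, f2, f3, f4, f5, f6⟩ := cf
    obtain ⟨d1, d2, d3, d4, d5, d6⟩ := cD
    simp only [coeff_sub, coeff_C_mul, f1, f2, f3, f4, f5, d1, d2, d3, d4, d5, d6] at H
    obtain ⟨g1, g2, g3, g4, g5⟩ := H
    have can : ∀ x : ℂ, F ^ 4 * x = 0 → x = 0 := fun x hx =>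
      (mul_eq_zero.mp hx).resolve_left (pow_ne_zero 4 h333)
    have zA1 : A1 = 0 := can _ (by linear_combination -g4 / 24)
    have zA2 : A2 = 0 := can _ (by linear_combination -g5 / 24)
    rw [zA1] at g1 g2
    rw [zA2] at g2 g3
    have zB1 : 6 * h * p1 - B1 = 0 := can _ (by linear_combination g1)
    have zB2 : 6 * h * p2 - B2 = 0 := can _ (by linear_combination g2)
    have zB3 : 6 * h * p3 - B3 = 0 := can _ (by linear_combination g3)
    obtain ⟨a1, b1, a2, b2, a3, b3, r1, r2, r3, r4, r5, r6, r7, r8, r9⟩ :=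
      spl_main p1 p2 p3 q0 q1 q2 q3 (hA1 ▸ zA1) (hA2 ▸ zA2)
        (by rw [← hh]; linear_combination -(zB1 + hB1) / 8)
        (by rw [← hh]; linear_combination -(zB2 + hB2) / 8)
        (by rw [← hh]; linear_combination -(zB3 + hB3) / 8)
    refine ⟨_, _, _, lin_hom (F * (s + a1)) (F * (t + b1)) F, lin_hom (s + a2) (t + b2) 1,
      lin_hom (s + a3) (t + b3) 1, ?_⟩
    obtain rfl : a3 = - a1 - a2 := by linear_combination r1
    obtain rfl : b3 = - b1 - b2 := by linear_combination r2
    rw [hfd, r3, r4, r5, r6, r7, r8, r9]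
    simp only [map_add, map_sub, map_mul, map_neg, map_one]
    ring
end
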